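/- arXiv:2401.11495 — 2 statements merged into one kernel-verified Lean document; each statement's English description precedes it below -/
import Mathlib

section
/- Suppose φ ∈ L¹(ℝ₊;ℝ₊) with ∫₀^∞ φ = 1 and σ := ∫₀^∞ t φ(t) dt < ∞, and let R be the resolvent of φ. Then 𝓘_R(t) := ∫₀^t R(s)ds satisfies 𝓘_R(t)/t → 1/σ as t → ∞, and 𝓘²_R(t) := ∫₀^t 𝓘_R(s)ds satisfies 𝓘²_R(t)/t² → 1/(2σ) as t → ∞. -/
open MeasureTheory Real Filter Set

/-- Cesaro-type conclusion from an affine-error bound. -/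
lemma tendsto_of_err (f : ℝ → ℝ) (c : ℝ)
    (h : ∀ ε > 0, ∃ B, ∀ t > 0, |f t - c| ≤ ε + B / t) : Tendsto f atTop (nhds c) := by
  rw [Metric.tendsto_atTop']
  intro ε hε
  obtain ⟨B, hB⟩ := h (ε / 2) (by positivity)
  refine ⟨max 0 (2 * B / ε), fun t ht => ?_⟩
  have ht0 : 0 < t := lt_of_le_of_lt (le_max_left _ _) ht
  have ht1 : 2 * B / ε < t := lt_of_le_of_lt (le_max_right _ _) ht
  rw [Real.dist_eq]
  refine lt_of_le_of_lt (hB t ht0) ?_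
  have : B / t < ε / 2 := by
    rw [div_lt_iff₀ ht0]
    rw [div_lt_iff₀ hε] at ht1
    linarith
  linarith

lemma asymp_of_bound (U : ℝ → ℝ) (c : ℝ) (hU : ∀ t, IntervalIntegrable U volume 0 t ∨ t < 0)
    (h : ∀ ε > 0, ∃ B, ∀ t ≥ 0, |U t - c * t| ≤ ε * t + B) :
    Tendsto (fun t => U t / t) atTop (nhds c) ∧
    Tendsto (fun t => (∫ s in (0:ℝ)..t, U s) / t^2) atTop (nhds (c/2)) := by
  constructor
  · apply tendsto_of_err
    intro ε hε
    obtain ⟨B, hB⟩ := h ε hε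
    refine ⟨B, fun t ht => ?_⟩
    have e : U t / t - c = (U t - c * t) / t := by field_simp
    rw [e, abs_div, abs_of_pos ht, div_le_iff₀ ht]
    have := hB t ht.le
    have e2 : (ε + B / t) * t = ε * t + B := by field_simp
    linarith
  · apply tendsto_of_err
    intro ε hε
    obtain ⟨B, hB⟩ := h ε hε
    refine ⟨B, fun t ht => ?_⟩
    have hi : IntervalIntegrable U volume 0 t := by
      rcases hU t with h | h
      · exact h
      · linarith
    have e0 : ∫ s in (0:ℝ)..t, (U s - c * s) = (∫ s in (0:ℝ)..t, U s) - c * (t^2/2) := by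
      rw [intervalIntegral.integral_sub hi (Continuous.intervalIntegrable (by fun_prop) _ _)]
      rw [intervalIntegral.integral_const_mul, integral_id]; simp
    have e1 : |∫ s in (0:ℝ)..t, (U s - c * s)| ≤ ∫ s in (0:ℝ)..t, (ε * s + B) := by
      rw [← Real.norm_eq_abs]
      apply intervalIntegral.norm_integral_le_of_norm_le ht.le
      · filter_upwards with s hs
        exact hB s hs.1.le
      · exact (Continuous.intervalIntegrable (by fun_prop) _ _)
    have e2 : ∫ s in (0:ℝ)..t, (ε * s + B) = ε * (t^2/2) + B * t := by
      rw [intervalIntegral.integral_add (Continuous.intervalIntegrable (by fun_prop) _ _)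
        (Continuous.intervalIntegrable (by fun_prop) _ _)]
      rw [intervalIntegral.integral_const_mul, integral_id]; simp; ring
    rw [e0, e2] at e1
    have e : (∫ s in (0:ℝ)..t, U s) / t^2 - c/2
      = ((∫ s in (0:ℝ)..t, U s) - c * (t^2/2)) / t^2 := by field_simp
    have ht2 : 0 < t^2 := by positivity
    rw [e, abs_div, abs_of_pos ht2, div_le_iff₀ ht2]
    have e3 : (ε + B / t) * t^2 = ε * t^2 + B * t := by field_simp
    have : 0 < ε * t^2 := by positivity
    linarith

/-- Fubini for the truncated convolution. -/
lemma conv_fubini (f g k : ℝ → ℝ) (C : ℝ) (hf : Integrable f) (hg : Integrable g)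
    (hk : Measurable k) (hkC : ∀ u, |k u| ≤ C) :
    ∫ u, (∫ s, f s * g (u - s)) * k u = ∫ r, g r * ∫ s, f s * k (r + s) := by
  have h1 : Integrable (fun p : ℝ × ℝ => f p.2 * g (p.1 - p.2) * k p.1)
      ((volume : Measure ℝ).prod volume) := by
    have := hf.convolution_integrand (ContinuousLinearMap.mul ℝ ℝ) hg
    simp only [ContinuousLinearMap.mul_apply'] at this
    refine this.mul_bdd (c := C) (hk.comp measurable_fst).aestronglyMeasurable ?_
    filter_upwards with p using hkC _
  have h2 : Integrable (fun p : ℝ × ℝ => g p.1 * f p.2 * k (p.1 + p.2))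
      ((volume : Measure ℝ).prod volume) := by
    refine (hg.mul_prod hf).mul_bdd (c := C)
      (hk.comp (measurable_fst.add measurable_snd)).aestronglyMeasurable ?_
    filter_upwards with p using hkC _
  calc ∫ u, (∫ s, f s * g (u - s)) * k u = ∫ u, ∫ s, f s * g (u - s) * k u := by
        simp_rw [integral_mul_const]
    _ = ∫ s, ∫ u, f s * g (u - s) * k u := integral_integral_swap h1
    _ = ∫ s, ∫ r, g r * f s * k (r + s) := by
        congr 1; ext s
        rw [← integral_sub_right_eq_self (fun r => g r * f s * k (r + s)) s]
        congr 1; ext u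
        simp; left; ring
    _ = ∫ r, ∫ s, g r * f s * k (r + s) := (integral_integral_swap h2).symm
    _ = _ := by
        congr 1; ext r
        rw [← integral_const_mul]
        congr 1; ext s; ring

lemma min_int (φ : ℝ → ℝ) (hφ_int : IntegrableOn φ (Set.Ioi 0)) (x : ℝ) (hx : 0 ≤ x) :
    IntegrableOn (fun s => min x s * φ s) (Ioi 0) := by
  refine Integrable.bdd_mul (c := x) hφ_int (by fun_prop) ?_
  filter_upwards [ae_restrict_mem measurableSet_Ioi] with s hs
  rw [Real.norm_eq_abs, abs_of_nonneg (le_min hx (le_of_lt hs))]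
  exact min_le_left _ _

lemma trunc_int (φ : ℝ → ℝ) (hφ_int : IntegrableOn φ (Set.Ioi 0))
    (hmass : (∫ t in Set.Ioi (0:ℝ), φ t) = 1) (x t : ℝ) (hx : 0 ≤ x) (hxt : x ≤ t) :
    ∫ s in Ioc 0 t, φ s * max (x - s) 0 = x - ∫ s in Ioi 0, min x s * φ s := by
  have e : ∫ s in Ioc 0 t, φ s * max (x - s) 0 = ∫ s in Ioi 0, φ s * max (x - s) 0 := by
    symm
    apply setIntegral_eq_of_subset_of_forall_sdiff_eq_zero measurableSet_Ioi
    · exact fun s hs => hs.1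
    · intro s hs
      have : t < s := by
        by_contra hh
        exact hs.2 ⟨hs.1, not_lt.mp hh⟩
      rw [max_eq_right (by linarith), mul_zero]
  have e2 : ∫ s in Ioi 0, φ s * max (x - s) 0 = ∫ s in Ioi 0, (x * φ s - min x s * φ s) := by
    congr 1; ext s
    rcases le_total x s with h | h
    · rw [max_eq_right (by linarith), min_eq_left h]; ring
    · rw [max_eq_left (by linarith), min_eq_right h]; ring
  rw [e, e2, integral_sub (hφ_int.const_mul x) (min_int φ hφ_int x hx), integral_const_mul, hmass,
    mul_one]

lemma key_identity (φ R : ℝ → ℝ)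
    (hφ_int : IntegrableOn φ (Set.Ioi 0))
    (hmass : (∫ t in Set.Ioi (0:ℝ), φ t) = 1)
    (hR_loc : LocallyIntegrableOn R (Set.Ici 0))
    (hres : ∀ t ≥ (0:ℝ), R t = φ t + ∫ s in (0:ℝ)..t, R (t - s) * φ s) (t : ℝ) (ht : 0 ≤ t) :
    IntegrableOn (fun r => R r * ∫ s in Ioi 0, min (t - r) s * φ s) (Icc 0 t) ∧
    ∫ r in Icc 0 t, R r * (∫ s in Ioi 0, min (t - r) s * φ s)
      = t - ∫ s in Ioi 0, min t s * φ s := by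
  have hRI : IntegrableOn R (Icc 0 t) :=
    hR_loc.integrableOn_compact_subset (fun s hs => hs.1) isCompact_Icc
  have hφI : IntegrableOn φ (Ioc 0 t) := hφ_int.mono_set (fun s hs => hs.1)
  set f := (Ioc 0 t).indicator φ with hf
  set g := (Icc 0 t).indicator R with hg
  set k := (Ioc 0 t).indicator (fun u => t - u) with hk
  have hfi : Integrable f := (integrable_indicator_iff measurableSet_Ioc).2 hφI
  have hgi : Integrable g := (integrable_indicator_iff measurableSet_Icc).2 hRI
  have hkm : Measurable k := (by fun_prop : Measurable (fun u : ℝ => t - u)).indicator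
    measurableSet_Ioc
  have hkC : ∀ u, |k u| ≤ t := by
    intro u
    by_cases hu : u ∈ Ioc 0 t
    · rw [hk, indicator_of_mem hu, abs_of_nonneg (by linarith [hu.2])]; linarith [hu.1]
    · rw [hk, indicator_of_notMem hu]; simpa
  have key := conv_fubini f g k t hfi hgi hkm hkC
  have hconv : ∀ u ∈ Ioc 0 t, ∫ s, f s * g (u - s) = R u - φ u := by
    intro u hu
    rw [hres u hu.1.le, add_sub_cancel_left, intervalIntegral.integral_of_le hu.1.le,
      ← integral_indicator measurableSet_Ioc]
    congr 1; ext s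
    by_cases hs : s ∈ Ioc 0 u
    · rw [indicator_of_mem hs, hf, hg, indicator_of_mem, indicator_of_mem, mul_comm]
      · exact ⟨by linarith [hs.2], by linarith [hs.1, hu.2]⟩
      · exact ⟨hs.1, hs.2.trans hu.2⟩
    · rw [indicator_of_notMem hs]
      by_cases h0 : 0 < s
      · have : u < s := by
          by_contra hh
          exact hs ⟨h0, not_lt.mp hh⟩
        rw [hg, indicator_of_notMem (a := u - s), mul_zero]
        intro h; linarith [h.1]
      · rw [hf, indicator_of_notMem, zero_mul]
        intro h; exact h0 h.1
  have hL : ∫ u, (∫ s, f s * g (u - s)) * k u = ∫ u in Ioc 0 t, (R u - φ u) * (t - u) := by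
    rw [← integral_indicator measurableSet_Ioc]
    congr 1; ext u
    by_cases hu : u ∈ Ioc 0 t
    · rw [indicator_of_mem hu, hconv u hu, hk, indicator_of_mem hu]
    · rw [indicator_of_notMem hu, hk, indicator_of_notMem hu, mul_zero]
  have hin : ∀ r ∈ Icc 0 t, r ≠ 0 → ∫ s, f s * k (r + s) =
      (t - r) - ∫ s in Ioi 0, min (t - r) s * φ s := by
    intro r hr _
    rw [← trunc_int φ hφ_int hmass (t - r) t (by linarith [hr.2]) (by linarith [hr.1]),
      ← integral_indicator measurableSet_Ioc]
    congr 1; ext s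
    by_cases hs : s ∈ Ioc 0 t
    · rw [indicator_of_mem hs, hf, indicator_of_mem hs]
      congr 1
      by_cases h : r + s ≤ t
      · rw [hk, indicator_of_mem, max_eq_left (by linarith)]
        · ring
        · exact ⟨by linarith [hs.1, hr.1], h⟩
      · rw [hk, indicator_of_notMem, max_eq_right (by linarith)]
        exact fun h' => h h'.2
    · rw [indicator_of_notMem hs, hf, indicator_of_notMem hs, zero_mul]
  have hin' : ∀ r ∈ Icc 0 t, ∫ s, f s * k (r + s) =
      (t - r) - ∫ s in Ioi 0, min (t - r) s * φ s := by
    intro r hr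
    by_cases h : r = 0
    · subst h
      rw [← trunc_int φ hφ_int hmass (t - 0) t (by linarith [hr.2]) (by linarith [hr.1]),
        ← integral_indicator measurableSet_Ioc]
      congr 1; ext s
      by_cases hs : s ∈ Ioc 0 t
      · rw [indicator_of_mem hs, hf, indicator_of_mem hs, hk, zero_add, indicator_of_mem hs,
          max_eq_left (by linarith [hs.2]), sub_zero]
      · rw [indicator_of_notMem hs, hf, indicator_of_notMem hs, zero_mul]
    · exact hin r hr h
  have hRt : ∫ r, g r * ∫ s, f s * k (r + s) =
      ∫ r in Icc 0 t, R r * ((t - r) - ∫ s in Ioi 0, min (t - r) s * φ s) := by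
    rw [← integral_indicator measurableSet_Icc]
    congr 1; ext r
    by_cases hr : r ∈ Icc 0 t
    · rw [indicator_of_mem hr, hin' r hr, hg, indicator_of_mem hr]
    · rw [indicator_of_notMem hr, hg, indicator_of_notMem hr, zero_mul]
  -- monotone in the truncation level, hence measurable
  have hbd : ∀ h : ℝ → ℝ, ∀ S : Set ℝ, MeasurableSet S → S ⊆ Icc 0 t → IntegrableOn h S →
      IntegrableOn (fun r => h r * (t - r)) S := by
    intro h S hSm hS hi
    refine Integrable.mul_bdd (c := t) hi (by fun_prop) ?_
    filter_upwards [ae_restrict_mem hSm] with s hs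
    have := hS hs
    rw [Real.norm_eq_abs, abs_of_nonneg (by linarith [this.2])]; linarith [this.1]
  have hI1 := hbd R (Icc 0 t) measurableSet_Icc subset_rfl hRI
  have hI2 := hbd φ (Ioc 0 t) measurableSet_Ioc Ioc_subset_Icc_self hφI
  have hI3 : IntegrableOn (fun r => R r * ((t - r) - ∫ s in Ioi 0, min (t - r) s * φ s))
      (Icc 0 t) := by
    have hm : Integrable (fun r => g r * ∫ s, f s * k (r + s)) := by
      have h2 : Integrable (fun p : ℝ × ℝ => g p.1 * f p.2 * k (p.1 + p.2))
          ((volume : Measure ℝ).prod volume) := by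
        refine (hgi.mul_prod hfi).mul_bdd (c := t)
          (hkm.comp (measurable_fst.add measurable_snd)).aestronglyMeasurable ?_
        filter_upwards with p using hkC _
      have := h2.integral_prod_left
      simpa only [mul_assoc, integral_const_mul] using this
    refine (hm.integrableOn (s := Icc 0 t)).congr_fun ?_ measurableSet_Icc
    intro r hr
    simp only
    rw [hin' r hr, hg, indicator_of_mem hr]
  have hI4 : IntegrableOn (fun r => R r * ∫ s in Ioi 0, min (t - r) s * φ s) (Icc 0 t) := by
    have := hI1.sub hI3
    refine this.congr_fun ?_ measurableSet_Icc
    intro r _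
    simp only [Pi.sub_apply]; ring
  refine ⟨hI4, ?_⟩
  rw [hL, hRt] at key
  have a1 : ∫ u in Ioc 0 t, (R u - φ u) * (t - u) =
      (∫ u in Icc 0 t, R u * (t - u)) - ∫ u in Ioc 0 t, φ u * (t - u) := by
    rw [integral_Icc_eq_integral_Ioc, ← integral_sub (hI1.mono_set Ioc_subset_Icc_self) hI2]
    congr 1; ext u; ring
  have a2 : ∫ r in Icc 0 t, R r * ((t - r) - ∫ s in Ioi 0, min (t - r) s * φ s) =
      (∫ u in Icc 0 t, R u * (t - u)) -
        ∫ r in Icc 0 t, R r * ∫ s in Ioi 0, min (t - r) s * φ s := by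
    rw [← integral_sub hI1 hI4]
    congr 1; ext u; ring
  have a3 : ∫ u in Ioc 0 t, φ u * (t - u) = t - ∫ s in Ioi 0, min t s * φ s := by
    rw [← trunc_int φ hφ_int hmass t t ht le_rfl]
    apply setIntegral_congr_fun measurableSet_Ioc
    intro u hu
    simp only
    rw [max_eq_left (by linarith [hu.2])]
  linarith

/-- Weakly critical asymptotics of the integrated resolvent: if `∫₀^∞ φ = 1` and
`σ = ∫₀^∞ tφ(t)dt < ∞`, then `𝓘_R(t)/t → 1/σ` and `𝓘²_R(t)/t² → 1/(2σ)` as `t → ∞`. -/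
theorem integrated_resolvent_critical_asymptotics
    (φ R : ℝ → ℝ) (σ : ℝ)
    (hφ_nonneg : ∀ t, 0 ≤ φ t)
    (hφ_int : IntegrableOn φ (Set.Ioi 0))
    (hmass : (∫ t in Set.Ioi (0:ℝ), φ t) = 1)
    (hmom_int : IntegrableOn (fun t => t * φ t) (Set.Ioi 0))
    (hσ : σ = ∫ t in Set.Ioi (0:ℝ), t * φ t)
    (hR_nonneg : ∀ t, 0 ≤ R t)
    (hR_loc : LocallyIntegrableOn R (Set.Ici 0))
    (hres : ∀ t ≥ (0:ℝ), R t = φ t + ∫ s in (0:ℝ)..t, R (t - s) * φ s) :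
    Tendsto (fun t => (∫ s in (0:ℝ)..t, R s) / t) atTop (nhds (1/σ))
    ∧ Tendsto (fun t => (∫ s in (0:ℝ)..t, ∫ r in (0:ℝ)..s, R r) / t^2) atTop (nhds (1/(2*σ))) := by
  set H : ℝ → ℝ := fun x => ∫ s in Ioi 0, min x s * φ s with hH
  have hminI := min_int φ hφ_int
  have hHσ : ∀ x, 0 ≤ x → H x ≤ σ := by
    intro x hx
    rw [hσ]
    apply setIntegral_mono_on (hminI x hx) hmom_int measurableSet_Ioi
    intro s _
    exact mul_le_mul_of_nonneg_right (min_le_right _ _) (hφ_nonneg s)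
  have hHmono : ∀ x y, 0 ≤ x → x ≤ y → H x ≤ H y := by
    intro x y hx hxy
    apply setIntegral_mono_on (hminI x hx) (hminI y (hx.trans hxy)) measurableSet_Ioi
    intro s _
    exact mul_le_mul_of_nonneg_right (min_le_min_right _ hxy) (hφ_nonneg s)
  have hH0 : ∀ x, 0 ≤ x → 0 ≤ H x := by
    intro x hx
    apply setIntegral_nonneg measurableSet_Ioi
    intro s hs
    exact mul_nonneg (le_min hx (le_of_lt hs)) (hφ_nonneg s)
  have hHlim : Tendsto H atTop (nhds σ) := by
    rw [hσ]
    apply tendsto_integral_filter_of_dominated_convergence (fun s => s * φ s)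
    · filter_upwards [eventually_ge_atTop 0] with x hx using (hminI x hx).aestronglyMeasurable
    · filter_upwards [eventually_ge_atTop 0] with x hx
      filter_upwards [ae_restrict_mem measurableSet_Ioi] with s hs
      rw [Real.norm_eq_abs, abs_of_nonneg (mul_nonneg (le_min hx (le_of_lt hs)) (hφ_nonneg s))]
      exact mul_le_mul_of_nonneg_right (min_le_right _ _) (hφ_nonneg s)
    · exact hmom_int
    · filter_upwards with s
      apply tendsto_const_nhds.congr'
      filter_upwards [eventually_ge_atTop s] with x hx
      rw [min_eq_right hx]
  have hσpos : 0 < σ := by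
    have h0 : 0 ≤ σ := (hH0 0 le_rfl).trans (hHσ 0 le_rfl)
    rcases h0.lt_or_eq with h | h
    · exact h
    exfalso
    have hz : ∫ t in Ioi (0:ℝ), t * φ t = 0 := by rw [← hσ, ← h]
    rw [integral_eq_zero_iff_of_nonneg_ae] at hz
    · have : ∫ t in Ioi (0:ℝ), φ t = 0 := by
        apply integral_eq_zero_of_ae
        filter_upwards [hz, ae_restrict_mem measurableSet_Ioi] with s hs hs0
        have hs0' : (s:ℝ) ≠ 0 := ne_of_gt hs0
        simpa [hs0'] using hs
      linarith
    · filter_upwards [ae_restrict_mem measurableSet_Ioi] with s hs0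
      exact mul_nonneg (le_of_lt hs0) (hφ_nonneg s)
    · exact hmom_int
  have hRI : ∀ t, IntegrableOn R (Icc 0 t) := fun t =>
    hR_loc.integrableOn_compact_subset (fun s hs => hs.1) isCompact_Icc
  have hUeq : ∀ t, 0 ≤ t → ∫ s in (0:ℝ)..t, R s = ∫ s in Icc 0 t, R s := by
    intro t ht
    rw [intervalIntegral.integral_of_le ht, integral_Icc_eq_integral_Ioc]
  have hlow : ∀ t, 0 ≤ t → t - σ ≤ σ * ∫ s in (0:ℝ)..t, R s := by
    intro t ht
    obtain ⟨hi, he⟩ := key_identity φ R hφ_int hmass hR_loc hres t ht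
    have : ∫ r in Icc 0 t, R r * (∫ s in Ioi 0, min (t - r) s * φ s) ≤
        ∫ r in Icc 0 t, σ * R r := by
      apply setIntegral_mono_on hi ((hRI t).const_mul σ) measurableSet_Icc
      intro r hr
      rw [mul_comm σ]
      exact mul_le_mul_of_nonneg_left (hHσ (t - r) (by linarith [hr.2])) (hR_nonneg r)
    rw [integral_const_mul, ← hUeq t ht] at this
    have h2 := hHσ t ht
    simp only [hH] at h2
    linarith
  have hup : ∀ a t, 0 ≤ a → 0 ≤ t → H a * (∫ s in (0:ℝ)..t, R s) ≤ t + a := by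
    intro a t ha ht
    obtain ⟨hi, he⟩ := key_identity φ R hφ_int hmass hR_loc hres (t + a) (by linarith)
    have hsub : Icc 0 t ⊆ Icc 0 (t + a) := Icc_subset_Icc le_rfl (by linarith)
    have h1 : ∫ r in Icc 0 t, H a * R r ≤
        ∫ r in Icc 0 t, R r * (∫ s in Ioi 0, min (t + a - r) s * φ s) := by
      apply setIntegral_mono_on ((hRI t).const_mul _) (hi.mono_set hsub) measurableSet_Icc
      intro r hr
      rw [mul_comm (H a)]
      exact mul_le_mul_of_nonneg_left (hHmono a (t + a - r) ha (by linarith [hr.2])) (hR_nonneg r)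
    have h2 : ∫ r in Icc 0 t, R r * (∫ s in Ioi 0, min (t + a - r) s * φ s) ≤
        ∫ r in Icc 0 (t + a), R r * (∫ s in Ioi 0, min (t + a - r) s * φ s) := by
      apply setIntegral_mono_set hi _ (Eventually.of_forall hsub)
      filter_upwards [ae_restrict_mem measurableSet_Icc] with r hr
      exact mul_nonneg (hR_nonneg r) (hH0 (t + a - r) (by linarith [hr.2]))
    rw [integral_const_mul, ← hUeq t ht] at h1
    have h3 := hH0 (t + a) (by linarith)
    simp only [hH] at h3
    linarith
  have e : 1 / (2 * σ) = (1 / σ) / 2 := by field_simp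
  rw [e]
  apply asymp_of_bound (fun t => ∫ s in (0:ℝ)..t, R s) (1 / σ)
  · intro t
    by_cases ht : t < 0
    · exact Or.inr ht
    · left
      apply ContinuousOn.intervalIntegrable
      apply intervalIntegral.continuousOn_primitive_interval
      rw [uIcc_of_le (not_lt.mp ht)]
      exact hRI t
  · intro ε hε
    have hlim : Tendsto (fun x => 1 / H x) atTop (nhds (1 / σ)) :=
      tendsto_const_nhds.div hHlim hσpos.ne'
    obtain ⟨a, ha0, ha1, ha2⟩ := ((eventually_ge_atTop (0:ℝ)).and
      ((hHlim.eventually (lt_mem_nhds hσpos)).and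
        (hlim.eventually (gt_mem_nhds (show 1 / σ < 1 / σ + ε by linarith))))).exists
    refine ⟨max 1 (a / H a), fun t ht => ?_⟩
    rw [abs_le]
    have hl := hlow t ht
    have hu := hup a t ha0 ht
    generalize (∫ s in (0:ℝ)..t, R s) = U at hl hu ⊢
    constructor
    · have : 1 / σ * t - 1 ≤ U := by
        have : 1 / σ * t - 1 = (t - σ) / σ := by field_simp
        rw [this, div_le_iff₀ hσpos]; linarith
      have := le_max_left 1 (a / H a)
      have : 0 ≤ ε * t := by positivity
      linarith
    · have h1 : U ≤ 1 / H a * t + a / H a := by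
        have : 1 / H a * t + a / H a = (t + a) / H a := by ring
        rw [this, le_div_iff₀ ha1]; linarith
      have := le_max_right 1 (a / H a)
      have := mul_le_mul_of_nonneg_right ha2.le ht
      linarith
end

section
/- For α ∈ (0,1) and β > 0, let f^{α,β}(t) = βt^{α-1}E_{α,α}(−βt^α) be the Mittag-Leffler density, whose Laplace transform is ∫₀^∞ e^{-λt}f^{α,β}(t)dt = β/(β+λ^α). If φ = f^{α,β}, then the resolvent R of φ satisfies ∫₀^t R(s)ds = β t^α / Γ(α+1) and ∫₀^t ∫₀^{s} R(r)dr ds = β t^{α+1}/Γ(α+2) for all t ≥ 0. -/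
open MeasureTheory Real Filter Set

/-- The two-parameter Mittag-Leffler function `E_{a,κ}(z) = Σ_k z^k/Γ(κ+ka)`. -/
noncomputable def mittagLeffler (a κ z : ℝ) : ℝ :=
  ∑' k : ℕ, z ^ k / Real.Gamma (κ + k * a)

lemma ml_gamma_lower (M s : ℝ) (hM : 0 < M) (hs : 1 ≤ s) :
    M ^ (s - 1) * Real.exp (-(M + 1)) ≤ Real.Gamma s := by
  rw [Real.Gamma_eq_integral (by linarith)]
  have hint := Real.GammaIntegral_convergent (s := s) (by linarith)
  have h1 : ∫ x in Ioc M (M + 1), Real.exp (-(M + 1)) * M ^ (s - 1)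
      ≤ ∫ x in Ioc M (M + 1), Real.exp (-x) * x ^ (s - 1) := by
    apply setIntegral_mono_on
    · exact continuous_const.integrableOn_Ioc
    · exact hint.mono_set (fun x hx => lt_trans hM hx.1)
    · exact measurableSet_Ioc
    · intro x hx
      have := hx.1
      have := hx.2
      have hs' : 0 ≤ s - 1 := by linarith
      gcongr
  have h2 : ∫ x in Ioc M (M + 1), Real.exp (-x) * x ^ (s - 1)
      ≤ ∫ x in Ioi 0, Real.exp (-x) * x ^ (s - 1) := by
    apply setIntegral_mono_set hint
    · filter_upwards [ae_restrict_mem measurableSet_Ioi] with x hx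
      have : 0 < x := hx
      simp only [Pi.zero_apply]
      positivity
    · exact (LE.le.eventuallyLE (fun x hx => lt_trans hM hx.1))
  refine le_trans ?_ (h1.trans h2)
  simp [mul_comm]

lemma ml_summable (α x : ℝ) (hα : 0 < α) (hx : 0 ≤ x) :
    Summable (fun k : ℕ => x ^ k / Real.Gamma (α + k * α)) := by
  set M : ℝ := (2 * (x + 1)) ^ (1 / α) with hMdef
  have hb : 0 < 2 * (x + 1) := by linarith
  have hM : 0 < M := by positivity
  have hMα : M ^ α = 2 * (x + 1) := by
    rw [hMdef, ← Real.rpow_mul hb.le]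
    field_simp
    simp
  have hgeo : Summable (fun k : ℕ => (1 / 2 : ℝ) ^ k * (M ^ (α - 1) * Real.exp (-(M + 1)))⁻¹) :=
    (summable_geometric_of_lt_one (by norm_num) (by norm_num)).mul_right _
  obtain ⟨N, hN⟩ := exists_nat_gt (1 / α)
  refine Summable.of_norm_bounded_eventually_nat hgeo ?_
  filter_upwards [eventually_ge_atTop N] with k hk
  have hk1 : (1 : ℝ) ≤ k * α := by
    have : 1 / α ≤ k := hN.le.trans (by exact_mod_cast hk)
    rwa [div_le_iff₀ hα] at this
  have hlow := ml_gamma_lower M (α + k * α) hM (by linarith)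
  have hpow : M ^ (α + k * α - 1) = M ^ (α - 1) * (2 * (x + 1)) ^ k := by
    rw [show α + k * α - 1 = (α - 1) + α * k by ring, Real.rpow_add hM, Real.rpow_mul hM.le, hMα,
      Real.rpow_natCast]
  rw [hpow] at hlow
  have hc : 0 < M ^ (α - 1) * Real.exp (-(M + 1)) := by positivity
  rw [Real.norm_of_nonneg (div_nonneg (by positivity) (Real.Gamma_nonneg_of_nonneg (by positivity)))]
  have hG : 0 < Real.Gamma (α + k * α) := Real.Gamma_pos_of_pos (by positivity)
  rw [div_le_iff₀ hG]
  calc x ^ k ≤ (x + 1) ^ k := by gcongr; linarith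
    _ = (1 / 2 : ℝ) ^ k * (M ^ (α - 1) * Real.exp (-(M + 1)))⁻¹ *
        (M ^ (α - 1) * (2 * (x + 1)) ^ k * Real.exp (-(M + 1))) := by
      rw [mul_pow, div_pow]; field_simp
      rw [one_pow, ]
    _ ≤ _ := by gcongr

lemma ml_continuous (α : ℝ) (hα : 0 < α) : Continuous (mittagLeffler α α) := by
  rw [continuous_iff_continuousAt]
  intro z
  have : ContinuousOn (mittagLeffler α α) (Icc (-(|z| + 1)) (|z| + 1)) := by
    unfold mittagLeffler
    apply continuousOn_tsum (u := fun k : ℕ => (|z| + 1) ^ k / Real.Gamma (α + k * α))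
    · intro i; fun_prop
    · exact ml_summable α _ hα (by positivity)
    · intro n x hx
      have hG : 0 < Real.Gamma (α + n * α) := Real.Gamma_pos_of_pos (by positivity)
      rw [norm_div, norm_pow, Real.norm_of_nonneg hG.le]
      have : ‖x‖ ≤ |z| + 1 := abs_le.2 hx
      gcongr
  apply this.continuousAt
  have := abs_lt.1 (lt_add_one |z|)
  exact Icc_mem_nhds this.1 this.2

lemma ml_beta (a b t : ℝ) (ha : 0 < a) (hb : 0 < b) (ht : 0 < t) :
    ∫ s in (0:ℝ)..t, s ^ (a - 1) * (t - s) ^ (b - 1)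
      = t ^ (a + b - 1) * (Real.Gamma a * Real.Gamma b / Real.Gamma (a + b)) := by
  have h := Complex.betaIntegral_scaled a b ht
  rw [Complex.betaIntegral_eq_Gamma_mul_div _ _ (by simpa) (by simpa)] at h
  apply Complex.ofReal_injective
  rw [← intervalIntegral.integral_ofReal]
  refine Eq.trans ?_ (h.trans ?_)
  · apply intervalIntegral.integral_congr
    intro s hs
    rw [uIcc_of_le ht.le] at hs
    simp only
    push_cast
    rw [Complex.ofReal_cpow hs.1, Complex.ofReal_cpow (sub_nonneg.2 hs.2)]
    push_cast
    rfl
  · push_cast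
    rw [Complex.ofReal_cpow ht.le, ← Complex.ofReal_add, Complex.Gamma_ofReal, Complex.Gamma_ofReal, Complex.Gamma_ofReal]
    push_cast
    rfl

lemma ml_beta_int (a b t : ℝ) (ha : 0 < a) (hb : 0 < b) (ht : 0 < t) :
    IntervalIntegrable (fun s => s ^ (a - 1) * (t - s) ^ (b - 1)) volume 0 t := by
  rw [intervalIntegrable_iff, uIoc_of_le ht.le]
  apply Integrable.of_integral_ne_zero
  rw [← intervalIntegral.integral_of_le ht.le, ml_beta a b t ha hb ht]
  have := Real.Gamma_pos_of_pos ha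
  have := Real.Gamma_pos_of_pos hb
  have := Real.Gamma_pos_of_pos (add_pos ha hb)
  positivity

/-- The Mittag-Leffler density. -/
noncomputable def mlPhi (α β t : ℝ) : ℝ := β * t ^ (α - 1) * mittagLeffler α α (-(β * t ^ α))

/-- The explicit resolvent kernel. -/
noncomputable def mlK (α β t : ℝ) : ℝ := β / Real.Gamma α * t ^ (α - 1)

lemma mlK_pos {α β t : ℝ} (hα : 0 < α) (hβ : 0 < β) (ht : 0 < t) : 0 < mlK α β t := by
  have := Real.Gamma_pos_of_pos hα
  unfold mlK; positivity

lemma ml_conv_int (α β t : ℝ) (hα : 0 < α) (ht : 0 < t) :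
    IntervalIntegrable (fun s => mlPhi α β s * mlK α β (t - s)) volume 0 t := by
  have h := ml_beta_int α α t hα hα ht
  have hc : Continuous (fun s : ℝ => mittagLeffler α α (-(β * s ^ α)) * (β * (β / Real.Gamma α))) := by
    have := ml_continuous α hα
    have h2 : Continuous (fun s : ℝ => s ^ α) := Real.continuous_rpow_const hα.le
    fun_prop
  refine (h.mul_continuousOn hc.continuousOn).congr ?_
  intro s _
  simp only [mlPhi, mlK]
  ring

lemma ml_conv (α β t : ℝ) (hα : 0 < α) (hβ : 0 < β) (ht : 0 < t) :
    ∫ s in (0:ℝ)..t, mlPhi α β s * mlK α β (t - s) = mlK α β t - mlPhi α β t := by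
  have hGα := Real.Gamma_pos_of_pos hα
  have hG : ∀ k : ℕ, 0 < Real.Gamma (α + k * α) := fun k => Real.Gamma_pos_of_pos (by positivity)
  set c : ℕ → ℝ := fun k => β ^ (k + 1) / Real.Gamma (α + k * α) * (β / Real.Gamma α) with hc
  have hcpos : ∀ k, 0 < c k := fun k => by have := hG k; simp only [hc]; positivity
  set B : ℕ → ℝ → ℝ := fun k s => s ^ (α + k * α - 1) * (t - s) ^ (α - 1) with hB
  set F : ℕ → ℝ → ℝ := fun k s => ((-1) ^ k * c k) * B k s with hF
  have hBint : ∀ k, IntegrableOn (B k) (Ioc 0 t) := fun k => by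
    have := ml_beta_int (α + k * α) α t (by positivity) hα ht
    rwa [intervalIntegrable_iff, uIoc_of_le ht.le] at this
  have hcB : ∀ k, c k * ∫ s in Ioc 0 t, B k s
      = (β * t ^ (α - 1)) * ((β * t ^ α) ^ (k + 1) / Real.Gamma (α + (k + 1 : ℕ) * α)) := fun k => by
    rw [← intervalIntegral.integral_of_le ht.le, ml_beta (α + k * α) α t (by positivity) hα ht]
    have e1 : α + k * α + α = α + (k + 1 : ℕ) * α := by push_cast; ring
    have e2 : t ^ (α + k * α + α - 1) = t ^ (α - 1) * (t ^ α) ^ (k + 1) := by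
      rw [← Real.rpow_natCast, ← Real.rpow_mul ht.le, ← Real.rpow_add ht]
      congr 1; push_cast; ring
    rw [e2, e1]
    have := hG k
    have := hG (k + 1)
    simp only [hc]
    field_simp
    rw [mul_pow]
  have hsumm : Summable (fun k : ℕ => (β * t ^ α) ^ (k + 1) / Real.Gamma (α + (k + 1 : ℕ) * α)) :=
    (summable_nat_add_iff 1).2 (ml_summable α (β * t ^ α) hα (by positivity))
  have hFint : ∀ k, Integrable (F k) (volume.restrict (Ioc 0 t)) := fun k => (hBint k).const_mul _
  have hnorm : ∀ k, ∫ s in Ioc 0 t, ‖F k s‖ = c k * ∫ s in Ioc 0 t, B k s := fun k => by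
    rw [← integral_const_mul]
    apply setIntegral_congr_fun measurableSet_Ioc
    intro s hs
    have h1 : 0 < s := hs.1
    have h2 : 0 ≤ t - s := sub_nonneg.2 hs.2
    have h3 : 0 ≤ B k s := by simp only [hB]; positivity
    simp only [hF, norm_mul, norm_pow, norm_neg, norm_one, one_pow, one_mul]
    rw [Real.norm_of_nonneg (hcpos k).le, Real.norm_of_nonneg h3]
  have hs1 : Summable (fun k => ∫ s in Ioc 0 t, ‖F k s‖) := by
    simp_rw [hnorm, hcB]
    exact hsumm.mul_left _
  have key := hasSum_integral_of_summable_integral_norm hFint hs1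
  have hEq : ∫ s in Ioc 0 t, ∑' k, F k s = ∫ s in (0:ℝ)..t, mlPhi α β s * mlK α β (t - s) := by
    rw [intervalIntegral.integral_of_le ht.le]
    apply setIntegral_congr_fun measurableSet_Ioc
    intro s hs
    have h1 : 0 < s := hs.1
    simp only [mlPhi, mlK, mittagLeffler]
    rw [← tsum_mul_left, ← tsum_mul_right]
    apply tsum_congr
    intro k
    simp only [hF, hB, hc]
    rw [show α + k * α - 1 = (α - 1) + α * k by ring, Real.rpow_add h1, Real.rpow_mul h1.le,
      Real.rpow_natCast, neg_pow (β * s ^ α), mul_pow, pow_succ]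
    ring
  rw [← hEq, ← key.tsum_eq]
  have hterm : ∀ k, ∫ s in Ioc 0 t, F k s
      = (-(β * t ^ (α - 1))) * ((-(β * t ^ α)) ^ (k + 1) / Real.Gamma (α + (k + 1 : ℕ) * α)) := fun k => by
    simp only [hF]
    rw [integral_const_mul, mul_assoc, hcB, neg_pow (β * t ^ α)]
    ring
  simp_rw [hterm]
  rw [tsum_mul_left]
  have hs2 : Summable (fun k : ℕ => (-(β * t ^ α)) ^ k / Real.Gamma (α + k * α)) := by
    refine Summable.of_norm_bounded (ml_summable α (β * t ^ α) hα (by positivity)) ?_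
    intro k
    rw [norm_div, norm_pow, norm_neg, Real.norm_of_nonneg (hG k).le, Real.norm_of_nonneg (by positivity)]
  have := hs2.tsum_eq_zero_add
  simp only [mlPhi, mlK, mittagLeffler]
  rw [this]
  simp only [pow_zero, Nat.cast_zero, zero_mul, add_zero]
  ring

lemma mlPhi_pos (α β : ℝ) (hα : 0 < α) (hα1 : α < 1) (hβ : 0 < β) :
    ∀ t, 0 < t → 0 < mlPhi α β t := by
  have hGα := Real.Gamma_pos_of_pos hα
  set g : ℝ → ℝ := fun s => mittagLeffler α α (-(β * s ^ α)) with hg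
  have hgc : Continuous g := by
    have := ml_continuous α hα
    have h2 : Continuous (fun s : ℝ => s ^ α) := Real.continuous_rpow_const hα.le
    fun_prop
  have hg0 : 0 < g 0 := by
    have : g 0 = 1 / Real.Gamma α := by
      simp only [hg, mittagLeffler, Real.zero_rpow hα.ne', mul_zero, neg_zero]
      rw [tsum_eq_single 0]
      · simp
      · intro k hk; simp [hk]
    rw [this]; positivity
  have hphi : ∀ s, mlPhi α β s = β * s ^ (α - 1) * g s := fun s => rfl
  suffices H : ∀ t, 0 < t → 0 < g t by
    intro t ht
    have := H t ht
    rw [hphi]; positivity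
  intro t1 ht1
  by_contra! hneg
  -- first zero
  set Z : Set ℝ := Icc 0 t1 ∩ g ⁻¹' {0} with hZ
  have hZc : IsCompact Z := isCompact_Icc.inter_right (isClosed_singleton.preimage hgc)
  have hZn : Z.Nonempty := by
    obtain ⟨x, hx, hx2⟩ := intermediate_value_Icc' ht1.le hgc.continuousOn ⟨hneg, hg0.le⟩
    exact ⟨x, hx, hx2⟩
  obtain ⟨t0, ⟨ht0m, ht0z⟩, hmin⟩ := hZc.exists_isLeast hZn
  have ht0z : g t0 = 0 := ht0z
  have ht0 : 0 < t0 := by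
    rcases ht0m.1.lt_or_eq with h | h
    · exact h
    · rw [← h] at ht0z; linarith
  have hgpos : ∀ s, 0 ≤ s → s < t0 → 0 < g s := by
    intro s hs hst
    by_contra! hn
    obtain ⟨x, hx, hx2⟩ := intermediate_value_Icc' hs hgc.continuousOn ⟨hn, hg0.le⟩
    have := hmin ⟨⟨hx.1, by linarith [hx.2, ht0m.2]⟩, hx2⟩
    linarith [hx.2]
  have hppos : ∀ s, 0 < s → s < t0 → 0 < mlPhi α β s := by
    intro s hs hst
    have := hgpos s hs.le hst
    rw [hphi]; positivity
  have hp0 : mlPhi α β t0 = 0 := by rw [hphi, ht0z, mul_zero]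
  -- the integral of the kernel
  have hKint : ∀ a b : ℝ, IntervalIntegrable (mlK α β) volume a b := fun a b =>
    (intervalIntegral.intervalIntegrable_rpow' (by linarith)).const_mul _
  have hKval : ∀ d : ℝ, 0 ≤ d → ∫ s in (0:ℝ)..d, mlK α β s = β / Real.Gamma α * (d ^ α / α) := by
    intro d hd
    simp only [mlK]
    rw [intervalIntegral.integral_const_mul, integral_rpow (Or.inl (by linarith))]
    simp [Real.zero_rpow hα.ne']
  have hlim : Tendsto (fun d : ℝ => β / Real.Gamma α * (d ^ α / α) * mlK α β (t0 - d)) (nhdsWithin 0 (Ioi 0))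
      (nhds (β / Real.Gamma α * ((0:ℝ) ^ α / α) * mlK α β (t0 - 0))) := by
    apply Tendsto.mono_left _ nhdsWithin_le_nhds
    have h2 : Continuous (fun s : ℝ => s ^ α) := Real.continuous_rpow_const hα.le
    have h3 : ContinuousAt (fun d : ℝ => (t0 - d) ^ (α - 1)) 0 := by
      apply ContinuousAt.rpow_const (by fun_prop)
      left; simpa using ht0.ne'
    have h4 : ContinuousAt (fun d : ℝ => β / Real.Gamma α * (d ^ α / α)) 0 := by fun_prop
    exact h4.mul (h3.const_mul _)
  rw [Real.zero_rpow hα.ne', zero_div, mul_zero, zero_mul] at hlim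
  have hkt0 := mlK_pos hα hβ ht0
  obtain ⟨d, ⟨hd1, hd2⟩, hd0⟩ := ((hlim.eventually_lt_const hkt0).and
    (nhdsWithin_le_nhds (eventually_lt_nhds ht0)) |>.and self_mem_nhdsWithin).exists
  have hd0 : 0 < d := hd0
  -- argmax on [t0 - d, t0]
  have hpc : ContinuousOn (mlPhi α β) (Icc (t0 - d) t0) := by
    have : ContinuousOn (fun s : ℝ => β * s ^ (α - 1) * g s) (Icc (t0 - d) t0) := by
      apply ContinuousOn.mul _ hgc.continuousOn
      apply ContinuousOn.mul continuousOn_const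
      apply ContinuousOn.rpow_const continuousOn_id
      intro x hx
      left
      have := hx.1
      simp only [id]; linarith
    exact this
  obtain ⟨t, htm, htmax⟩ := isCompact_Icc.exists_isMaxOn (nonempty_Icc.2 (by linarith)) hpc
  have htd : 0 < mlPhi α β (t0 - d) := hppos _ (by linarith) (by linarith)
  have htp : 0 < mlPhi α β t :=
    lt_of_lt_of_le htd (htmax (left_mem_Icc.2 (by linarith)))
  have htlt : t < t0 := by
    rcases htm.2.lt_or_eq with h | h
    · exact h
    · rw [h, hp0] at htp; exact absurd htp (lt_irrefl _)
  have htpos : 0 < t := by linarith [htm.1]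
  have hkt := mlK_pos hα hβ htpos
  have c1 := ml_conv α β t hα hβ htpos
  have c0 := ml_conv α β t0 hα hβ ht0
  rw [hp0, sub_zero] at c0
  have i1 := ml_conv_int α β t hα htpos
  have i0 := ml_conv_int α β t0 hα ht0
  have i01 : IntervalIntegrable (fun s => mlPhi α β s * mlK α β (t0 - s)) volume 0 t :=
    i0.mono_set (by rw [uIcc_of_le htpos.le, uIcc_of_le ht0.le]; exact Icc_subset_Icc_right htlt.le)
  have i02 : IntervalIntegrable (fun s => mlPhi α β s * mlK α β (t0 - s)) volume t t0 :=
    i0.mono_set (by rw [uIcc_of_le htlt.le, uIcc_of_le ht0.le]; exact Icc_subset_Icc_left htpos.le)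
  have hsplit := intervalIntegral.integral_add_adjacent_intervals i01 i02
  have b1 : ∫ s in (0:ℝ)..t, mlPhi α β s * mlK α β (t0 - s)
      ≤ ∫ s in (0:ℝ)..t, (mlPhi α β s * mlK α β (t - s)) * (mlK α β t0 / mlK α β t) := by
    apply intervalIntegral.integral_mono_on_of_le_Ioo htpos.le i01 (i1.mul_const _)
    intro s hs
    have hs0 := hs.1
    have hst := hs.2
    have hp := (hppos s hs.1 (by linarith)).le
    rw [mul_assoc]
    apply mul_le_mul_of_nonneg_left _ hp
    rw [mul_div_assoc', le_div_iff₀ hkt]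
    simp only [mlK]
    have h5 : (t0 - s) ^ (α - 1) * t ^ (α - 1) ≤ (t - s) ^ (α - 1) * t0 ^ (α - 1) := by
      rw [← Real.mul_rpow (by linarith) (by linarith), ← Real.mul_rpow (by linarith) (by linarith)]
      apply Real.rpow_le_rpow_of_nonpos
      · apply mul_pos <;> linarith
      · nlinarith
      · linarith
    have h6 : 0 ≤ (β / Real.Gamma α) * (β / Real.Gamma α) := by positivity
    nlinarith [mul_le_mul_of_nonneg_left h5 h6]
  have b2 : ∫ s in t..t0, mlPhi α β s * mlK α β (t0 - s)
      ≤ ∫ s in t..t0, mlPhi α β t * mlK α β (t0 - s) := by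
    have hi : IntervalIntegrable (fun s => mlK α β (t0 - s)) volume t t0 := by
      have := (hKint (t0 - t) 0).comp_sub_left t0
      simpa using this
    apply intervalIntegral.integral_mono_on_of_le_Ioo htlt.le i02 (hi.const_mul _)
    intro s hs
    apply mul_le_mul_of_nonneg_right
    · exact htmax ⟨by linarith [hs.1, htm.1], hs.2.le⟩
    · exact (mlK_pos hα hβ (by linarith [hs.2])).le
  rw [intervalIntegral.integral_mul_const, c1] at b1
  rw [intervalIntegral.integral_const_mul, intervalIntegral.integral_comp_sub_left (mlK α β), sub_self,
    hKval _ (by linarith)] at b2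
  have hle1 : β / Real.Gamma α * ((t0 - t) ^ α / α) ≤ β / Real.Gamma α * (d ^ α / α) := by
    have : t0 - t ≤ d := by linarith [htm.1]
    have : 0 ≤ t0 - t := by linarith
    gcongr
  have hle2 : mlK α β t ≤ mlK α β (t0 - d) := by
    unfold mlK
    apply mul_le_mul_of_nonneg_left _ (by positivity)
    exact Real.rpow_le_rpow_of_nonpos (by linarith) htm.1 (by linarith)
  have hA : 0 ≤ β / Real.Gamma α * ((t0 - t) ^ α / α) := by
    have : 0 ≤ t0 - t := by linarith
    positivity
  have hfin : β / Real.Gamma α * ((t0 - t) ^ α / α) * mlK α β t < mlK α β t0 :=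
    lt_of_le_of_lt (mul_le_mul hle1 hle2 hkt.le (hA.trans hle1)) hd1
  rw [← hsplit] at c0
  set A := β / Real.Gamma α * ((t0 - t) ^ α / α)
  have e : (mlK α β t - mlPhi α β t) * (mlK α β t0 / mlK α β t)
      = mlK α β t0 - mlPhi α β t * (mlK α β t0 / mlK α β t) := by field_simp
  have : mlK α β t0 / mlK α β t ≤ A := by
    have : mlPhi α β t * (mlK α β t0 / mlK α β t) ≤ mlPhi α β t * A := by linarith
    exact le_of_mul_le_mul_left this htp
  rw [div_le_iff₀ hkt] at this
  linarith

lemma ml_ind_mul (f g : ℝ → ℝ) (t : ℝ) :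
    (fun s => (Ioi (0:ℝ)).indicator f s * (Ioi (0:ℝ)).indicator g (t - s))
      = (Ioo 0 t).indicator (fun s => f s * g (t - s)) := by
  funext s
  by_cases h1 : 0 < s <;> by_cases h2 : s < t
  · rw [indicator_of_mem (show s ∈ Ioi (0:ℝ) from h1),
      indicator_of_mem (show t - s ∈ Ioi (0:ℝ) from sub_pos.2 h2),
      indicator_of_mem (show s ∈ Ioo 0 t from ⟨h1, h2⟩)]
  · rw [indicator_of_notMem (show t - s ∉ Ioi (0:ℝ) from fun h => h2 (sub_pos.1 h)),
      indicator_of_notMem (show s ∉ Ioo 0 t from fun h => h2 h.2), mul_zero]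
  · rw [indicator_of_notMem (show s ∉ Ioi (0:ℝ) from h1),
      indicator_of_notMem (show s ∉ Ioo 0 t from fun h => h1 h.1), zero_mul]
  · rw [indicator_of_notMem (show s ∉ Ioi (0:ℝ) from h1),
      indicator_of_notMem (show s ∉ Ioo 0 t from fun h => h1 h.1), zero_mul]

lemma ml_conv_ind (f g : ℝ → ℝ) (t : ℝ) :
    convolution ((Ioi (0:ℝ)).indicator f) ((Ioi (0:ℝ)).indicator g)
      (ContinuousLinearMap.mul ℝ ℝ) volume t = ∫ s in Ioo 0 t, f s * g (t - s) := by
  rw [← integral_indicator measurableSet_Ioo, ← ml_ind_mul]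
  rfl

lemma ml_conv_total (f g : ℝ → ℝ) (hf : IntegrableOn f (Ioi 0)) (hg : IntegrableOn g (Ioi 0)) :
    Integrable (fun t => ∫ s in Ioo 0 t, f s * g (t - s)) ∧
    (∫ t, ∫ s in Ioo 0 t, f s * g (t - s)) = (∫ t in Ioi 0, f t) * ∫ t in Ioi 0, g t := by
  have hf' := hf.integrable_indicator measurableSet_Ioi
  have hg' := hg.integrable_indicator measurableSet_Ioi
  have e : (fun t => ∫ s in Ioo 0 t, f s * g (t - s)) =
      convolution ((Ioi (0:ℝ)).indicator f) ((Ioi (0:ℝ)).indicator g)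
      (ContinuousLinearMap.mul ℝ ℝ) volume := by
    funext t; rw [ml_conv_ind]
  rw [e]
  refine ⟨hf'.integrable_convolution _ hg', ?_⟩
  rw [integral_convolution _ hf' hg', integral_indicator measurableSet_Ioi,
    integral_indicator measurableSet_Ioi]
  rfl

lemma ml_conv_ae (f g : ℝ → ℝ) (hf : IntegrableOn f (Ioi 0)) (hg : IntegrableOn g (Ioi 0)) :
    ∀ᵐ t, IntegrableOn (fun s => f s * g (t - s)) (Ioo 0 t) := by
  have hf' := hf.integrable_indicator measurableSet_Ioi
  have hg' := hg.integrable_indicator measurableSet_Ioi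
  filter_upwards [hf'.ae_convolution_exists (ContinuousLinearMap.mul ℝ ℝ) hg'] with t ht
  have h : Integrable (fun s => (Ioi (0:ℝ)).indicator f s * (Ioi (0:ℝ)).indicator g (t - s)) := ht
  rw [ml_ind_mul] at h
  exact (integrable_indicator_iff measurableSet_Ioo).1 h

lemma ml_laplace (α β l : ℝ) (hα : 0 < α) (hα1 : α < 1) (hβ : 0 < β) (hl : 0 < l) :
    IntegrableOn (fun t => Real.exp (-l * t) * mlPhi α β t) (Ioi 0) ∧
    ∫ t in Ioi (0:ℝ), Real.exp (-l * t) * mlPhi α β t = β / (β + l ^ α) := by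
  have hGα := Real.Gamma_pos_of_pos hα
  have hlα : 0 < l ^ α := Real.rpow_pos_of_pos hl α
  have hq : ∫ t in Ioi (0:ℝ), Real.exp (-l * t) * mlK α β t = β / l ^ α := by
    have h := Real.integral_rpow_mul_exp_neg_mul_Ioi hα hl
    have e : ∀ t : ℝ, Real.exp (-l * t) * mlK α β t
        = β / Real.Gamma α * (t ^ (α - 1) * Real.exp (-(l * t))) := by
      intro t; simp only [mlK]; rw [neg_mul]; ring
    simp_rw [e]
    rw [integral_const_mul, h, Real.div_rpow zero_le_one hl.le, Real.one_rpow]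
    field_simp
  have hqi : IntegrableOn (fun t => Real.exp (-l * t) * mlK α β t) (Ioi 0) := by
    apply Integrable.of_integral_ne_zero
    rw [hq]; positivity
  have hmeas : Measurable (mlPhi α β) := by
    unfold mlPhi
    have := (ml_continuous α hα).measurable
    fun_prop
  have hpos := mlPhi_pos α β hα hα1 hβ
  have hle : ∀ t, 0 < t → mlPhi α β t ≤ mlK α β t := by
    intro t ht
    have h := ml_conv α β t hα hβ ht
    have : 0 ≤ ∫ s in (0:ℝ)..t, mlPhi α β s * mlK α β (t - s) := by
      rw [intervalIntegral.integral_of_le ht.le, integral_Ioc_eq_integral_Ioo]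
      apply setIntegral_nonneg measurableSet_Ioo
      intro s hs
      exact mul_nonneg (hpos s hs.1).le (mlK_pos hα hβ (sub_pos.2 hs.2)).le
    linarith
  have hpi : IntegrableOn (fun t => Real.exp (-l * t) * mlPhi α β t) (Ioi 0) := by
    refine Integrable.mono hqi (by fun_prop) ?_
    filter_upwards [ae_restrict_mem measurableSet_Ioi] with t ht
    have ht : 0 < t := ht
    have h1 := hpos t ht
    have h2 := mlK_pos hα hβ ht
    rw [Real.norm_of_nonneg (by positivity), Real.norm_of_nonneg (by positivity)]
    gcongr
    exact hle t ht
  refine ⟨hpi, ?_⟩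
  obtain ⟨-, htot⟩ := ml_conv_total _ _ hpi hqi
  have e : (fun t => ∫ s in Ioo 0 t, Real.exp (-l * s) * mlPhi α β s
      * (Real.exp (-l * (t - s)) * mlK α β (t - s)))
      = (Ioi (0:ℝ)).indicator (fun t => Real.exp (-l * t) * mlK α β t
          - Real.exp (-l * t) * mlPhi α β t) := by
    funext t
    by_cases ht : 0 < t
    · rw [indicator_of_mem (show t ∈ Ioi (0:ℝ) from ht), ← mul_sub, ← ml_conv α β t hα hβ ht,
        intervalIntegral.integral_of_le ht.le, integral_Ioc_eq_integral_Ioo, ← integral_const_mul]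
      congr 1
      funext s
      rw [show -l * t = -l * s + -l * (t - s) by ring, Real.exp_add]
      ring
    · rw [indicator_of_notMem (show t ∉ Ioi (0:ℝ) from ht), Ioo_eq_empty ht]
      simp
  rw [e, integral_indicator measurableSet_Ioi, integral_sub hqi hpi, hq] at htot
  rw [eq_div_iff (by positivity)]
  generalize (∫ t in Ioi (0:ℝ), Real.exp (-l * t) * mlPhi α β t) = I at htot ⊢
  field_simp at htot
  linarith

lemma ml_unique (α β : ℝ) (hα : 0 < α) (hα1 : α < 1) (hβ : 0 < β) (R : ℝ → ℝ)
    (hR_loc : LocallyIntegrableOn R (Set.Ici 0))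
    (hres : ∀ t > (0:ℝ), R t = mlPhi α β t + ∫ s in Ioo (0:ℝ) t, R (t - s) * mlPhi α β s)
    (T : ℝ) : ∀ᵐ t ∂(volume.restrict (Ioc 0 T)), R t = mlK α β t := by
  have hpos := mlPhi_pos α β hα hα1 hβ
  obtain ⟨hpi, hpv⟩ := ml_laplace α β 1 hα hα1 hβ one_pos
  rw [Real.one_rpow] at hpv
  have hRT : IntegrableOn R (Icc 0 T) :=
    hR_loc.integrableOn_compact_subset Icc_subset_Ici_self isCompact_Icc
  have hKT : IntegrableOn (mlK α β) (Icc 0 T) := by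
    by_cases hT : 0 ≤ T
    · have : IntervalIntegrable (mlK α β) volume 0 T :=
        (intervalIntegral.intervalIntegrable_rpow' (by linarith)).const_mul _
      rwa [intervalIntegrable_iff_integrableOn_Icc_of_le hT] at this
    · rw [Icc_eq_empty hT]; exact integrableOn_empty
  have hw : ContinuousOn (fun t : ℝ => Real.exp (-1 * t)) (Icc 0 T) := by fun_prop
  -- weighted, truncated functions
  set r : ℝ → ℝ := (Ioc 0 T).indicator (fun t => Real.exp (-1 * t) * R t) with hr
  set d : ℝ → ℝ := (Ioc 0 T).indicator (fun t => Real.exp (-1 * t) * |R t - mlK α β t|) with hd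
  have hri : IntegrableOn r (Ioi 0) := by
    apply Integrable.integrableOn
    apply IntegrableOn.integrable_indicator _ measurableSet_Ioc
    exact (hRT.continuousOn_mul hw isCompact_Icc).mono_set Ioc_subset_Icc_self
  have hdI : Integrable d := by
    apply IntegrableOn.integrable_indicator _ measurableSet_Ioc
    have : IntegrableOn (fun t => |R t - mlK α β t|) (Icc 0 T) := (hRT.sub hKT).abs
    exact (this.continuousOn_mul hw isCompact_Icc).mono_set Ioc_subset_Icc_self
  have hd0 : ∀ t, 0 ≤ d t := fun t => indicator_nonneg (fun t _ => by positivity) t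
  have hdi : IntegrableOn d (Ioi 0) := hdI.integrableOn
  have hdeq : ∫ t in Ioi 0, d t = ∫ t, d t := by
    apply setIntegral_eq_integral_of_forall_compl_eq_zero
    intro t ht
    exact indicator_of_notMem (fun h => ht h.1) _
  obtain ⟨hci, hcv⟩ := ml_conv_total _ _ hpi hdi
  have hae := ml_conv_ae _ _ hpi hri
  have hmain : ∀ᵐ t, d t ≤ ∫ s in Ioo 0 t, (Real.exp (-1 * s) * mlPhi α β s) * d (t - s) := by
    filter_upwards [hae] with t ht
    by_cases htT : t ∈ Ioc 0 T
    · have ht0 : 0 < t := htT.1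
      have hE : ∀ s, Real.exp (-1 * t) = Real.exp (-1 * s) * Real.exp (-1 * (t - s)) := by
        intro s; rw [← Real.exp_add]; congr 1; ring
      have hmem : ∀ s ∈ Ioo 0 t, t - s ∈ Ioc 0 T := fun s hs =>
        ⟨sub_pos.2 hs.2, by linarith [hs.1, htT.2]⟩
      have i1 : IntegrableOn (fun s => R (t - s) * mlPhi α β s) (Ioo 0 t) := by
        have h := ht.const_mul (Real.exp (-1 * t))⁻¹
        refine IntegrableOn.congr_fun h ?_ measurableSet_Ioo
        intro s hs
        simp only [hr]
        rw [indicator_of_mem (hmem s hs), hE s]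
        field_simp
      have i2 : IntegrableOn (fun s => mlPhi α β s * mlK α β (t - s)) (Ioo 0 t) := by
        have := ml_conv_int α β t hα ht0
        rw [intervalIntegrable_iff, uIoc_of_le ht0.le] at this
        exact this.mono_set Ioo_subset_Ioc_self
      have c := ml_conv α β t hα hβ ht0
      rw [intervalIntegral.integral_of_le ht0.le, integral_Ioc_eq_integral_Ioo] at c
      have hD : R t - mlK α β t
          = ∫ s in Ioo 0 t, (R (t - s) * mlPhi α β s - mlPhi α β s * mlK α β (t - s)) := by
        rw [integral_sub i1 i2, c, hres t ht0]; ring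
      have hdt : d t = Real.exp (-1 * t) * |R t - mlK α β t| := indicator_of_mem htT _
      rw [hdt, hD]
      calc _ ≤ Real.exp (-1 * t) * ∫ s in Ioo 0 t,
              |R (t - s) * mlPhi α β s - mlPhi α β s * mlK α β (t - s)| := by
            gcongr
            exact abs_integral_le_integral_abs
        _ = _ := by
            rw [← integral_const_mul]
            apply setIntegral_congr_fun measurableSet_Ioo
            intro s hs
            simp only [hd]
            rw [indicator_of_mem (hmem s hs), hE s,
              show R (t - s) * mlPhi α β s - mlPhi α β s * mlK α β (t - s)
                = mlPhi α β s * (R (t - s) - mlK α β (t - s)) by ring, abs_mul,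
              abs_of_pos (hpos s hs.1)]
            ring
    · have : d t = 0 := indicator_of_notMem htT _
      rw [this]
      apply setIntegral_nonneg measurableSet_Ioo
      intro s hs
      have := hpos s hs.1
      have := hd0 (t - s)
      positivity
  have hI := integral_mono_ae hdI hci hmain
  rw [hcv, hpv, hdeq] at hI
  have hlt : β / (β + 1) < 1 := by rw [div_lt_one (by linarith)]; linarith
  have hI0 : 0 ≤ ∫ t, d t := integral_nonneg hd0
  have hz : ∫ t, d t = 0 := by nlinarith
  rw [integral_eq_zero_iff_of_nonneg hd0 hdI] at hz
  filter_upwards [ae_restrict_of_ae hz, ae_restrict_mem measurableSet_Ioc] with t h1 h2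
  have hdt : d t = Real.exp (-1 * t) * |R t - mlK α β t| := indicator_of_mem h2 _
  rw [hdt] at h1
  have h3 : |R t - mlK α β t| = 0 := by
    rcases mul_eq_zero.1 h1 with h | h
    · exact absurd h (Real.exp_pos _).ne'
    · exact h
  linarith [abs_eq_zero.1 h3]

/-- For the Mittag-Leffler kernel `φ = f^{α,β}`, with Laplace transform
`β/(β+λ^α)`, the resolvent `R` satisfies `∫₀^t R = βt^α/Γ(α+1)` and
`∫₀^t∫₀^s R = βt^{α+1}/Γ(α+2)`. -/
theorem mittag_leffler_resolvent
    (α β : ℝ) (hα : α ∈ Set.Ioo (0:ℝ) 1) (hβ : 0 < β)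
    (φ R : ℝ → ℝ)
    (hφ : ∀ t > (0:ℝ), φ t = β * t ^ (α - 1) * mittagLeffler α α (-(β * t ^ α)))
    (hR_nonneg : ∀ t, 0 ≤ R t)
    (hR_loc : LocallyIntegrableOn R (Set.Ici 0))
    (hres : ∀ t ≥ (0:ℝ), R t = φ t + ∫ s in (0:ℝ)..t, R (t - s) * φ s) :
    (∀ l > (0:ℝ), (∫ t in Set.Ioi (0:ℝ), Real.exp (-l * t) * φ t) = β / (β + l ^ α))
    ∧ (∀ t ≥ (0:ℝ), (∫ s in (0:ℝ)..t, R s) = β * t ^ α / Real.Gamma (α + 1))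
    ∧ (∀ t ≥ (0:ℝ), (∫ s in (0:ℝ)..t, ∫ r in (0:ℝ)..s, R r)
          = β * t ^ (α + 1) / Real.Gamma (α + 2)) := by
  obtain ⟨hα0, hα1⟩ := hα
  have hφ' : ∀ t > (0:ℝ), φ t = mlPhi α β t := hφ
  have hGα := Real.Gamma_pos_of_pos hα0
  have hres' : ∀ t > (0:ℝ), R t = mlPhi α β t + ∫ s in Ioo (0:ℝ) t, R (t - s) * mlPhi α β s := by
    intro t ht
    rw [hres t ht.le, hφ' t ht, intervalIntegral.integral_of_le ht.le, integral_Ioc_eq_integral_Ioo]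
    congr 1
    apply setIntegral_congr_fun measurableSet_Ioo
    intro s hs
    simp only
    rw [hφ' s hs.1]
  have hun := ml_unique α β hα0 hα1 hβ R hR_loc hres'
  have h2 : ∀ t ≥ (0:ℝ), (∫ s in (0:ℝ)..t, R s) = β * t ^ α / Real.Gamma (α + 1) := by
    intro t ht
    have e : ∫ s in (0:ℝ)..t, R s = ∫ s in (0:ℝ)..t, mlK α β s := by
      rw [intervalIntegral.integral_of_le ht, intervalIntegral.integral_of_le ht]
      exact integral_congr_ae (hun t)
    rw [e, Real.Gamma_add_one hα0.ne']
    simp only [mlK]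
    rw [intervalIntegral.integral_const_mul, integral_rpow (Or.inl (by linarith))]
    simp only [sub_add_cancel, Real.zero_rpow hα0.ne', sub_zero]
    field_simp
  refine ⟨?_, h2, ?_⟩
  · intro l hl
    rw [← (ml_laplace α β l hα0 hα1 hβ hl).2]
    apply setIntegral_congr_fun measurableSet_Ioi
    intro t ht
    simp only
    rw [hφ' t ht]
  · intro t ht
    have e : ∫ s in (0:ℝ)..t, ∫ r in (0:ℝ)..s, R r
        = ∫ s in (0:ℝ)..t, β / Real.Gamma (α + 1) * s ^ α := by
      apply intervalIntegral.integral_congr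
      intro s hs
      rw [uIcc_of_le ht] at hs
      simp only
      rw [h2 s hs.1]; ring
    have hG1 := Real.Gamma_pos_of_pos (show 0 < α + 1 by linarith)
    rw [e, intervalIntegral.integral_const_mul, integral_rpow (Or.inl (by linarith)),
      show α + 2 = (α + 1) + 1 by ring, Real.Gamma_add_one (by linarith : α + 1 ≠ 0),
      Real.zero_rpow (by linarith)]
    have : α + 1 ≠ 0 := by linarith
    field_simp
    ring
end
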